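/- Let (G, sat) be an instance with strict cardinal preferences. Then all ordinally stable fractional matchings of (G, sat) match exactly the same set of agents: for any two ordinally stable fractional matchings M and M' and any agent v, v is matched under M if and only if v is matched under M'. In particular, the agents are partitioned into those that are (fully) matched in every ordinally stable fractional matching and those that are matched in none. -/

import Mathlib

/-!
Write `d v = ∑ u, M v u` and `d' v = ∑ u, M' v u`. An ordinally stable `M` satisfies, on every
edge `uv`, the linear inequality `M(u, ≽ v) + M(v, ≽ u) - M u v ≥ 1` (`one_le_of_ordStable`).
Weight this inequality by `M' u v` and sum over ordered pairs (`sum_le_of_ordStable`); do the same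
with `M` and `M'` exchanged, and add. At a vertex `v`, strictness of the preferences says that any
two neighbours are comparable in exactly one direction unless they coincide, so
`∑ u, M'(v,u) M(v, ≽ u) + ∑ u, M(v,u) M'(v, ≽ u) = d v * d' v + ∑ u, M v u * M' v u`
(`sum_mul_wge_add`). The correction terms `M * M'` cancel, leaving
`∑ v, (d v + d' v) ≤ 2 * ∑ v, d v * d' v`, that is
`∑ v, (d v * (1 - d' v) + d' v * (1 - d v)) ≤ 0`. All summands are nonnegative, hence zero, so
`d v > 0` forces `d' v = 1`, and conversely.
-/


open Finset
open scoped Classical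

variable {V : Type*}

/-- Two agents find each other acceptable iff at least one of them assigns
positive satisfaction to the other. -/
def Adj (sat : V → V → ℚ) (u v : V) : Prop :=
  0 < sat u v ∨ 0 < sat v u

instance (sat : V → V → ℚ) (u v : V) : Decidable (Adj sat u v) :=
  inferInstanceAs (Decidable (0 < sat u v ∨ 0 < sat v u))

/-- `sat` describes a valid instance: satisfactions are nonnegative, an agent has
zero satisfaction towards itself, and the acceptability graph has no isolated vertices. -/
structure IsInstance [Fintype V] (sat : V → V → ℚ) : Prop where
  nonneg : ∀ u v, 0 ≤ sat u v
  sat_self : ∀ u, sat u u = 0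
  noIsolated : ∀ v, ∃ u, Adj sat v u

/-- `M` is a fractional matching of the acceptability graph of `sat`. -/
structure IsMatching [Fintype V] (sat : V → V → ℚ) (M : V → V → ℝ) : Prop where
  symm : ∀ u v, M u v = M v u
  nonneg : ∀ u v, 0 ≤ M u v
  support : ∀ u v, ¬ Adj sat u v → M u v = 0
  degree_le_one : ∀ v, ∑ u, M v u ≤ 1

/-- `M(x, ≽ y)`: total matching value of `x` with neighbours liked at least as much as `y`. -/
noncomputable def wge [Fintype V] (sat : V → V → ℚ) (M : V → V → ℝ) (x y : V) : ℝ :=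
  ∑ z ∈ Finset.univ.filter (fun z => Adj sat x z ∧ sat x y ≤ sat x z), M x z

/-- `M(x, ≻ y)`: total matching value of `x` with neighbours strictly preferred to `y`. -/
noncomputable def wgt [Fintype V] (sat : V → V → ℚ) (M : V → V → ℝ) (x y : V) : ℝ :=
  ∑ z ∈ Finset.univ.filter (fun z => Adj sat x z ∧ sat x y < sat x z), M x z

/-- Utility of agent `v` under matching `M`. -/
noncomputable def util [Fintype V] (sat : V → V → ℚ) (M : V → V → ℝ) (v : V) : ℝ :=
  ∑ u, (sat v u : ℝ) * M v u

/-- Social welfare of a matching. -/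
noncomputable def welfare [Fintype V] (sat : V → V → ℚ) (M : V → V → ℝ) : ℝ :=
  ∑ v, util sat M v

/-- Ordinal stability: no edge is ordinally blocking. -/
def OrdStable [Fintype V] (sat : V → V → ℚ) (M : V → V → ℝ) : Prop :=
  ∀ u v, Adj sat u v → ¬ (wge sat M u v < 1 ∧ wge sat M v u < 1)

/-- Cardinal stability: no edge is cardinally blocking. -/
def CardStable [Fintype V] (sat : V → V → ℚ) (M : V → V → ℝ) : Prop :=
  ∀ u v, Adj sat u v → ¬ (util sat M u < (sat u v : ℝ) ∧ util sat M v < (sat v u : ℝ))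

/-- Linear stability: no edge is linearly blocking. -/
def LinStable [Fintype V] (sat : V → V → ℚ) (M : V → V → ℝ) : Prop :=
  ∀ u v, Adj sat u v → ¬ (wge sat M u v + wge sat M v u - M u v < 1)

/-- Strict preferences: no ties among distinct neighbours. -/
def StrictPrefs (sat : V → V → ℚ) : Prop :=
  ∀ v x y, Adj sat v x → Adj sat v y → x ≠ y → sat v x ≠ sat v y

/-- The acceptability graph is bipartite with parts `U` and its complement. -/
def BipartiteWith (sat : V → V → ℚ) (U : Set V) : Prop :=
  ∀ u v, Adj sat u v → (u ∈ U ↔ v ∉ U)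

/-- Integral matching. -/
def IntegralMatching (M : V → V → ℝ) : Prop := ∀ u v, M u v = 0 ∨ M u v = 1

/-- Number of fully matched agents. -/
noncomputable def nfully [Fintype V] (M : V → V → ℝ) : ℕ :=
  (Finset.univ.filter (fun v => ∑ u, M v u = (1 : ℝ))).card

theorem Adj.symm' {sat : V → V → ℚ} {u v : V} (h : Adj sat u v) : Adj sat v u := Or.symm h

theorem le_wge [Fintype V] {sat : V → V → ℚ} {M : V → V → ℝ} (hM : IsMatching sat M)
    {u v : V} (h : Adj sat u v) : M u v ≤ wge sat M u v := by
  unfold wge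
  exact Finset.single_le_sum (f := fun z => M u z) (fun z _ => hM.nonneg u z) (by simp [h])

/-- Ordinal stability implies linear stability. -/
theorem one_le_of_ordStable [Fintype V] {sat : V → V → ℚ} {M : V → V → ℝ}
    (hM : IsMatching sat M) (hS : OrdStable sat M) {u v : V} (h : Adj sat u v) :
    1 ≤ wge sat M u v + wge sat M v u - M u v := by
  have h1 := le_wge hM h
  have h2 := le_wge hM h.symm'
  rw [hM.symm v u] at h2
  by_cases h3 : wge sat M u v < 1
  · have h4 : ¬ wge sat M v u < 1 := fun h4 => hS u v h ⟨h3, h4⟩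
    linarith
  · linarith

/-- The stability inequalities of `M`, weighted by a second matching `M'` and summed over ordered
pairs, so that each edge counts twice. -/
theorem sum_le_of_ordStable [Fintype V] {sat : V → V → ℚ} {M M' : V → V → ℝ}
    (hM : IsMatching sat M) (hM' : IsMatching sat M') (hS : OrdStable sat M) :
    ∑ v, ∑ u, M' v u ≤ 2 * ∑ v, ∑ u, M' v u * wge sat M v u - ∑ v, ∑ u, M v u * M' v u := by
  have hswap : ∑ v, ∑ u, M' v u * wge sat M u v = ∑ v, ∑ u, M' v u * wge sat M v u := by
    rw [Finset.sum_comm]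
    simp only [fun u v => hM'.symm u v]
  have hle : ∑ v, ∑ u, M' v u ≤
      ∑ v, ∑ u, (M' v u * wge sat M v u + M' v u * wge sat M u v - M v u * M' v u) := by
    refine Finset.sum_le_sum fun v _ => Finset.sum_le_sum fun u _ => ?_
    by_cases h : Adj sat v u
    · nlinarith [mul_le_mul_of_nonneg_left (one_le_of_ordStable hM hS h) (hM'.nonneg v u)]
    · simp [hM'.support v u h]
  simp only [Finset.sum_sub_distrib, Finset.sum_add_distrib] at hle
  linarith

/-- Under strict preferences, a pair of distinct neighbours of `v` is counted by exactly one of the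
two sums on the left, and a pair of equal neighbours by both. -/
theorem sum_mul_wge_add [Fintype V] {sat : V → V → ℚ} (hstrict : StrictPrefs sat)
    {M M' : V → V → ℝ} (hM : IsMatching sat M) (hM' : IsMatching sat M') (v : V) :
    ∑ u, M' v u * wge sat M v u + ∑ u, M v u * wge sat M' v u =
      (∑ u, M v u) * (∑ u, M' v u) + ∑ u, M v u * M' v u := by
  have h1 : ∑ u, M' v u * wge sat M v u =
      ∑ z, ∑ u, if Adj sat v z ∧ sat v u ≤ sat v z then M v z * M' v u else 0 := by
    rw [Finset.sum_comm]
    refine Finset.sum_congr rfl fun u _ => ?_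
    rw [wge, Finset.mul_sum, Finset.sum_filter]
    simp only [mul_comm]
  have h2 : ∑ u, M v u * wge sat M' v u =
      ∑ z, ∑ u, if Adj sat v u ∧ sat v z ≤ sat v u then M v z * M' v u else 0 := by
    refine Finset.sum_congr rfl fun u _ => ?_
    rw [wge, Finset.mul_sum, Finset.sum_filter]
  have h3 : ∑ u, M v u * M' v u = ∑ z, ∑ u, if z = u then M v z * M' v u else 0 := by
    simp
  rw [h1, h2, h3, Finset.sum_mul_sum]
  simp only [← Finset.sum_add_distrib]
  refine Finset.sum_congr rfl fun z _ => Finset.sum_congr rfl fun u _ => ?_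
  by_cases hz : Adj sat v z
  swap
  · simp [hM.support v z hz]
  by_cases hu : Adj sat v u
  swap
  · simp [hM'.support v u hu]
  by_cases hzu : z = u
  · subst hzu
    simp [hz]
  · rcases lt_or_gt_of_ne (hstrict v z u hz hu hzu) with h | h
    · simp [hu, hzu, h.le, h.not_ge]
    · simp [hz, hzu, h.le, h.not_ge]

/-- under strict preferences, all ordinally stable fractional matchings
match exactly the same set of agents. -/
theorem ordinallyStable_same_matched_agents [Fintype V]
    (sat : V → V → ℚ) (hinst : IsInstance sat) (hstrict : StrictPrefs sat) :
    ∀ M M' : V → V → ℝ,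
      IsMatching sat M → IsMatching sat M' → OrdStable sat M → OrdStable sat M' →
      ∀ v, (0 < ∑ u, M v u ↔ 0 < ∑ u, M' v u) := by
  intro M M' hM hM' hS hS' v
  have hd : ∀ w, 0 ≤ ∑ u, M w u := fun w => Finset.sum_nonneg fun u _ => hM.nonneg w u
  have hd' : ∀ w, 0 ≤ ∑ u, M' w u := fun w => Finset.sum_nonneg fun u _ => hM'.nonneg w u
  have h1 := sum_le_of_ordStable hM hM' hS
  have h2 := sum_le_of_ordStable hM' hM hS'
  have h3 := Finset.sum_congr (rfl : (Finset.univ : Finset V) = Finset.univ)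
    fun w _ => sum_mul_wge_add hstrict hM hM' w
  simp only [Finset.sum_add_distrib] at h3
  simp only [mul_comm (M' _ _) (M _ _)] at h2
  have hA : ∀ w, 0 ≤ (∑ u, M w u) * (1 - ∑ u, M' w u) := fun w =>
    mul_nonneg (hd w) (sub_nonneg.2 (hM'.degree_le_one w))
  have hB : ∀ w, 0 ≤ (∑ u, M' w u) * (1 - ∑ u, M w u) := fun w =>
    mul_nonneg (hd' w) (sub_nonneg.2 (hM.degree_le_one w))
  have htotal : ∑ w, ((∑ u, M w u) * (1 - ∑ u, M' w u) + (∑ u, M' w u) * (1 - ∑ u, M w u)) ≤ 0 := by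
    simp only [mul_sub, mul_one, Finset.sum_add_distrib, Finset.sum_sub_distrib,
      mul_comm (∑ u, M' _ u) (∑ u, M _ u)]
    linarith
  have hv := (Finset.single_le_sum (fun w _ => add_nonneg (hA w) (hB w))
    (Finset.mem_univ v)).trans htotal
  have hAv := hA v
  have hBv := hB v
  constructor
  · intro hpos
    by_contra hn
    have h0 : ∑ u, M' v u = 0 := le_antisymm (not_lt.1 hn) (hd' v)
    rw [h0] at hv
    linarith
  · intro hpos
    by_contra hn
    have h0 : ∑ u, M v u = 0 := le_antisymm (not_lt.1 hn) (hd v)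
    rw [h0] at hv
    linarith
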